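/- Let [a,b] ⊂ ℝ be compact, and let f and f₀ be strictly positive probability densities on [a,b] with TV(log f) < ∞ and TV(log f₀) < ∞. Set p_f = (1/2) log((f + f₀)/(2f₀)). Then TV(p_f) ≤ (1/2)(TV(log f) + TV(log f₀)) ≤ (1 + TV(log f) + TV(log f₀))/2. -/

import Mathlib

open MeasureTheory Set

/-!
Writing `u = log f - log f₀`, one has `p_f = (log (1 + exp u) - log 2) / 2`. The map
`u ↦ log (1 + exp u)` is `1`-Lipschitz, so `p_f` is a `1/2`-Lipschitz function of
`log f - log f₀`, and the variation of a difference is at most the sum of the variations.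
-/

/-- The softplus function `x ↦ log (1 + exp x)`, through which `log (f + g)` depends on the
log-ratio of `f` and `g`. -/
noncomputable def softplus (x : ℝ) : ℝ := Real.log (1 + Real.exp x)

lemma softplus_log_sub_log {x y : ℝ} (hx : 0 < x) (hy : 0 < y) :
    softplus (Real.log x - Real.log y) = Real.log ((x + y) / y) := by
  rw [softplus, Real.exp_sub, Real.exp_log hx, Real.exp_log hy, one_add_div hy.ne', add_comm]

lemma one_add_exp_le_exp_abs_sub_mul (x y : ℝ) :
    1 + Real.exp x ≤ Real.exp |x - y| * (1 + Real.exp y) := by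
  have one_le : 1 ≤ Real.exp |x - y| := Real.one_le_exp (abs_nonneg _)
  have exp_le : Real.exp x ≤ Real.exp |x - y| * Real.exp y := by
    rw [← Real.exp_add, Real.exp_le_exp]
    linarith [le_abs_self (x - y)]
  linarith

lemma lipschitzWith_softplus : LipschitzWith 1 softplus := by
  refine LipschitzWith.of_le_add fun x y => ?_
  calc
    softplus x ≤ Real.log (Real.exp |x - y| * (1 + Real.exp y)) :=
      Real.log_le_log (by positivity) (one_add_exp_le_exp_abs_sub_mul x y)
    _ = softplus y + dist x y := by
      rw [Real.log_mul (by positivity) (by positivity), Real.log_exp, add_comm, softplus,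
        Real.dist_eq]

section Variation

variable {α : Type*} [LinearOrder α] {s : Set α}

lemma eVariationOn_sub_le {E : Type*} [SeminormedAddCommGroup E] (f g : α → E) :
    eVariationOn (fun t => f t - g t) s ≤ eVariationOn f s + eVariationOn g s := by
  refine iSup_le fun ⟨n, u, u_mono, u_mem⟩ => ?_
  have edist_sub_sub_le (x y x' y' : E) :
      edist (x - y) (x' - y') ≤ edist x x' + edist y y' := by
    simpa only [edist_dist, ← ENNReal.ofReal_add dist_nonneg dist_nonneg] using
      ENNReal.ofReal_le_ofReal (dist_sub_sub_le x y x' y')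
  calc
    ∑ i ∈ Finset.range n, edist (f (u (i + 1)) - g (u (i + 1))) (f (u i) - g (u i))
        ≤ ∑ i ∈ Finset.range n,
            (edist (f (u (i + 1))) (f (u i)) + edist (g (u (i + 1))) (g (u i))) :=
      Finset.sum_le_sum fun _ _ => edist_sub_sub_le _ _ _ _
    _ = ∑ i ∈ Finset.range n, edist (f (u (i + 1))) (f (u i)) +
          ∑ i ∈ Finset.range n, edist (g (u (i + 1))) (g (u i)) := Finset.sum_add_distrib
    _ ≤ eVariationOn f s + eVariationOn g s :=
      add_le_add (eVariationOn.sum_le u_mono u_mem) (eVariationOn.sum_le u_mono u_mem)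

variable {f f₀ : α → ℝ}

lemma eVariationOn_half_mul_log_add_div_le
    (hf : ∀ t ∈ s, 0 < f t) (hf₀ : ∀ t ∈ s, 0 < f₀ t) :
    eVariationOn (fun t => (1 / 2) * Real.log ((f t + f₀ t) / (2 * f₀ t))) s ≤
      (1 / 2 : NNReal) * (eVariationOn (fun t => Real.log (f t)) s +
        eVariationOn (fun t => Real.log (f₀ t)) s) := by
  let φ : ℝ → ℝ := fun u => (1 / 2) * (softplus u - Real.log 2)
  let logRatio : α → ℝ := fun t => Real.log (f t) - Real.log (f₀ t)
  have φ_lipschitz : LipschitzWith (1 / 2) φ :=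
    LipschitzWith.of_le_add_mul _ fun u v => by
      have := lipschitzWith_softplus.le_add_mul u v
      simp only [φ, NNReal.coe_div, NNReal.coe_one, NNReal.coe_ofNat] at this ⊢
      linarith
  have eqOn_comp :
      EqOn (fun t => (1 / 2) * Real.log ((f t + f₀ t) / (2 * f₀ t))) (φ ∘ logRatio) s := by
    intro t ht
    have sum_pos : 0 < f t + f₀ t := add_pos (hf t ht) (hf₀ t ht)
    simp only [φ, logRatio, Function.comp_apply, softplus_log_sub_log (hf t ht) (hf₀ t ht)]
    rw [mul_comm 2 (f₀ t), ← div_div,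
      Real.log_div (div_pos sum_pos (hf₀ t ht)).ne' two_ne_zero]
  calc
    eVariationOn (fun t => (1 / 2) * Real.log ((f t + f₀ t) / (2 * f₀ t))) s
        = eVariationOn (φ ∘ logRatio) s := eVariationOn.congr eqOn_comp
    _ ≤ (1 / 2 : NNReal) * eVariationOn logRatio s :=
      φ_lipschitz.lipschitzOnWith.comp_eVariationOn_le (mapsTo_univ _ _)
    _ ≤ _ := by gcongr; exact eVariationOn_sub_le _ _

theorem stmt_16_general
    (hfpos : ∀ t ∈ s, 0 < f t)
    (hfTV : eVariationOn (fun t => Real.log (f t)) s ≠ ⊤)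
    (hf₀pos : ∀ t ∈ s, 0 < f₀ t)
    (hf₀TV : eVariationOn (fun t => Real.log (f₀ t)) s ≠ ⊤) :
    (eVariationOn (fun t => (1 / 2) * Real.log ((f t + f₀ t) / (2 * f₀ t))) s).toReal ≤
      (1 / 2) * ((eVariationOn (fun t => Real.log (f t)) s).toReal
        + (eVariationOn (fun t => Real.log (f₀ t)) s).toReal) ∧
    (1 / 2) * ((eVariationOn (fun t => Real.log (f t)) s).toReal
        + (eVariationOn (fun t => Real.log (f₀ t)) s).toReal) ≤
      (1 + (eVariationOn (fun t => Real.log (f t)) s).toReal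
        + (eVariationOn (fun t => Real.log (f₀ t)) s).toReal) / 2 := by
  refine ⟨?_, by linarith⟩
  have variation_le := ENNReal.toReal_mono (by finiteness)
    (eVariationOn_half_mul_log_add_div_le hfpos hf₀pos)
  simpa [ENNReal.toReal_mul, ENNReal.toReal_add hfTV hf₀TV] using variation_le

end Variation

/-- for strictly positive probability densities `f, f₀` on
`[a,b]` with logs of bounded variation,
`TV(p_f) ≤ (1/2)(TV(log f) + TV(log f₀)) ≤ (1 + TV(log f) + TV(log f₀))/2`
where `p_f = (1/2)log((f + f₀)/(2f₀))`. -/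
theorem stmt_16 (a b : ℝ) (hab : a < b)
    (f f₀ : ℝ → ℝ)
    (hfpos : ∀ t ∈ Icc a b, 0 < f t)
    (hfint : IntegrableOn f (Icc a b))
    (hfone : (∫ t in Icc a b, f t) = 1)
    (hfTV : eVariationOn (fun t => Real.log (f t)) (Icc a b) ≠ ⊤)
    (hf₀pos : ∀ t ∈ Icc a b, 0 < f₀ t)
    (hf₀int : IntegrableOn f₀ (Icc a b))
    (hf₀one : (∫ t in Icc a b, f₀ t) = 1)
    (hf₀TV : eVariationOn (fun t => Real.log (f₀ t)) (Icc a b) ≠ ⊤) :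
    (eVariationOn (fun t => (1 / 2) * Real.log ((f t + f₀ t) / (2 * f₀ t)))
        (Icc a b)).toReal ≤
      (1 / 2) * ((eVariationOn (fun t => Real.log (f t)) (Icc a b)).toReal
        + (eVariationOn (fun t => Real.log (f₀ t)) (Icc a b)).toReal) ∧
    (1 / 2) * ((eVariationOn (fun t => Real.log (f t)) (Icc a b)).toReal
        + (eVariationOn (fun t => Real.log (f₀ t)) (Icc a b)).toReal) ≤
      (1 + (eVariationOn (fun t => Real.log (f t)) (Icc a b)).toReal
        + (eVariationOn (fun t => Real.log (f₀ t)) (Icc a b)).toReal) / 2 :=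
  stmt_16_general hfpos hfTV hf₀pos hf₀TV
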